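/- Let A be a complex N×N matrix and h a complex number such that the matrices I - hA and I - (h/2)A are invertible, and define M = (I - hA)^{-1} ( I + (h/6)A - (5h/6) A (I - hA)^{-1} - (2h/3) A ((h/2)A - I)^{-1} ( I + (h/4)A - (h/4) A (I - hA)^{-1} ) ). Then for every eigenvector v of A with eigenvalue λ (so 1 - hλ ≠ 0 and 2 - hλ ≠ 0), one has M v = R(hλ) v, where R(z) = (z^3 + 18z - 12)/(6(1-z)^2(z-2)). -/

import Mathlib

/-!
For the linear system `y' = A y`, linearizing the stages of MPRK(3,2) at a positive steady state
expresses their Jacobians as rational functions of `A`. Such a function acts on an eigenvector of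
`A` as the same function of the eigenvalue `λ`, and evaluating it at the scalar `λ` produces
`R (h * λ)`.
-/

open scoped Ring

theorem ringInverse_neg {S : Type*} [Ring S] (a : S) : (-a)⁻¹ʳ = -a⁻¹ʳ := by
  have inverse_neg_one : (-1 : S)⁻¹ʳ = -1 := Ring.inverse_unit (-1)
  rw [← neg_one_mul a, Ring.inverse_mul (.inl isUnit_one.neg), inverse_neg_one, mul_neg_one]

theorem ne_zero_of_isUnit_of_smul_eq_smul {K S V : Type*} [Zero K] [Monoid S] [AddMonoid V]
    [SMulWithZero K V] [DistribMulAction S V] {a : S} (ha : IsUnit a) {c : K} {v : V}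
    (hv : v ≠ 0) (hav : a • v = c • v) : c ≠ 0 := by
  rintro rfl
  rw [zero_smul, ha.smul_eq_zero] at hav
  exact hv hav

section Eigenpair

variable {K S V : Type*} [Field K] [Ring S] [Algebra K S] [AddCommGroup V] [Module K V]
  [Module S V] [IsScalarTower K S V]

variable (K S) in
/-- The pairs `(a, c)` such that `a` acts on `v` as the scalar `c`. They are collected in a
subalgebra of `S × K` so that rational expressions can be evaluated at `a` and `c` in parallel. -/
def eigenpairSubalgebra (v : V) : Subalgebra K (S × K) where
  carrier := {p | p.1 • v = p.2 • v}
  mul_mem' {p q} (hp : p.1 • v = p.2 • v) (hq : q.1 • v = q.2 • v) :=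
    show (p.1 * q.1) • v = (p.2 * q.2) • v by
      rw [mul_smul, hq, smul_comm, hp, smul_smul, mul_comm]
  add_mem' {p q} (hp : p.1 • v = p.2 • v) (hq : q.1 • v = q.2 • v) :=
    show (p.1 + q.1) • v = (p.2 + q.2) • v by
      rw [add_smul, add_smul, hp, hq]
  algebraMap_mem' t := algebraMap_smul S t v

variable {a : S} {c : K} {v : V}

theorem mem_eigenpairSubalgebra : (a, c) ∈ eigenpairSubalgebra K S v ↔ a • v = c • v :=
  Iff.rfl

theorem ringInverse_mem_eigenpairSubalgebra (ha : IsUnit a)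
    (hac : (a, c) ∈ eigenpairSubalgebra K S v) : (a⁻¹ʳ, c⁻¹ʳ) ∈ eigenpairSubalgebra K S v := by
  rw [mem_eigenpairSubalgebra] at hac ⊢
  rcases eq_or_ne v 0 with rfl | hv
  · simp only [smul_zero]
  have hc : c ≠ 0 := ne_zero_of_isUnit_of_smul_eq_smul ha hv hac
  rw [← ha.smul_left_cancel, smul_smul, Ring.mul_inverse_cancel a ha, one_smul, smul_comm, hac,
    smul_smul, Ring.inverse_mul_cancel c hc.isUnit, one_smul]

theorem one_sub_smul_mem_eigenpairSubalgebra (hac : (a, c) ∈ eigenpairSubalgebra K S v) (t : K) :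
    (1 - t • a, 1 - t • c) ∈ eigenpairSubalgebra K S v :=
  sub_mem (one_mem _) (Subalgebra.smul_mem _ hac t)

end Eigenpair

section Definitions

variable {K S : Type*} [Field K] [Ring S] [Algebra K S]

/-- The Jacobian of the second stage of MPRK(3,2), with time step `h`, for `y' = A y` at a positive
steady state. Here `A` lies in an arbitrary algebra, so that the method can be evaluated both at a
matrix and at a scalar; `⁻¹ʳ` is the total inverse, with value `0` off the units. -/
noncomputable def mprk32SecondStageJacobian (h : K) (A : S) : S :=
  (1 - h • A)⁻¹ʳ

/-- The Jacobian `D₃` of the third stage of MPRK(3,2), the solution of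
`(1 - (h / 2) A) D₃ = 1 + (h / 4) A - (h / 4) A D₂` where `D₂` is the Jacobian of the second
stage. -/
noncomputable def mprk32ThirdStageJacobian (h : K) (A : S) : S :=
  (1 - (h / 2) • A)⁻¹ʳ * (1 + (h / 4) • A - (h / 4) • (A * mprk32SecondStageJacobian h A))

/-- The Jacobian `D` of the MPRK(3,2) map, the solution of
`(1 - h A) D = 1 + (h / 6) A - (5 h / 6) A D₂ + (2 h / 3) A D₃` where `D₂` and `D₃` are the
Jacobians of the second and third stages. -/
noncomputable def mprk32Jacobian (h : K) (A : S) : S :=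
  (1 - h • A)⁻¹ʳ *
    (1 + (h / 6) • A - (5 * h / 6) • (A * mprk32SecondStageJacobian h A) +
      (2 * h / 3) • (A * mprk32ThirdStageJacobian h A))

/-- The stability function `R` of MPRK(3,2); its poles `1` and `2` get the value `0`. -/
def mprk32StabilityFunction (z : K) : K :=
  (z ^ 3 + 18 * z - 12) / (6 * (1 - z) ^ 2 * (z - 2))

end Definitions

section Scalar

variable {K : Type*} [Field K] [NeZero (2 : K)]

theorem mprk32ThirdStageJacobian_scalar {h lam : K} (h1 : 1 - h * lam ≠ 0)
    (h2 : 2 - h * lam ≠ 0) :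
    mprk32ThirdStageJacobian h lam =
      (4 - 4 * (h * lam) - (h * lam) ^ 2) / (2 * (1 - h * lam) * (2 - h * lam)) := by
  have hfour : (4 : K) ≠ 0 := by
    rw [show (4 : K) = 2 * 2 by norm_num]
    exact mul_ne_zero two_ne_zero two_ne_zero
  have inverse_eq : (1 - h / 2 * lam)⁻¹ = 2 / (2 - h * lam) := by
    rw [show 1 - h / 2 * lam = (2 - h * lam) / 2 by field_simp, inv_div]
  simp only [mprk32ThirdStageJacobian, mprk32SecondStageJacobian, Ring.inverse_eq_inv, smul_eq_mul,
    inverse_eq]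
  field_simp
  ring

theorem mprk32Jacobian_scalar [NeZero (3 : K)] {h lam : K} (h1 : 1 - h * lam ≠ 0)
    (h2 : 2 - h * lam ≠ 0) :
    mprk32Jacobian h lam = mprk32StabilityFunction (h * lam) := by
  have hsix : (6 : K) ≠ 0 := by
    rw [show (6 : K) = 2 * 3 by norm_num]
    exact mul_ne_zero two_ne_zero three_ne_zero
  have sub_two_ne_zero : h * lam - 2 ≠ 0 := by rwa [← neg_sub, neg_ne_zero]
  rw [mprk32Jacobian, mprk32ThirdStageJacobian_scalar h1 h2, mprk32StabilityFunction]
  simp only [mprk32SecondStageJacobian, Ring.inverse_eq_inv, smul_eq_mul]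
  field_simp
  ring

end Scalar

section Eigenvector

variable {K S V : Type*} [Field K] [Ring S] [Algebra K S] [AddCommGroup V] [Module K V]
  [Module S V] [IsScalarTower K S V] {A : S} {h lam : K} {v : V}

theorem mprk32SecondStageJacobian_mem_eigenpairSubalgebra (h1 : IsUnit (1 - h • A))
    (heig : (A, lam) ∈ eigenpairSubalgebra K S v) :
    (mprk32SecondStageJacobian h A, mprk32SecondStageJacobian h lam) ∈
      eigenpairSubalgebra K S v :=
  ringInverse_mem_eigenpairSubalgebra h1 (one_sub_smul_mem_eigenpairSubalgebra heig h)

theorem mprk32ThirdStageJacobian_mem_eigenpairSubalgebra (h1 : IsUnit (1 - h • A))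
    (h2 : IsUnit (1 - (h / 2) • A)) (heig : (A, lam) ∈ eigenpairSubalgebra K S v) :
    (mprk32ThirdStageJacobian h A, mprk32ThirdStageJacobian h lam) ∈ eigenpairSubalgebra K S v := by
  have stage₂ := mul_mem heig (mprk32SecondStageJacobian_mem_eigenpairSubalgebra h1 heig)
  exact mul_mem
    (ringInverse_mem_eigenpairSubalgebra h2 (one_sub_smul_mem_eigenpairSubalgebra heig (h / 2)))
    (sub_mem (add_mem (one_mem _) (Subalgebra.smul_mem _ heig (h / 4)))
      (Subalgebra.smul_mem _ stage₂ (h / 4)))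

theorem mprk32Jacobian_mem_eigenpairSubalgebra (h1 : IsUnit (1 - h • A))
    (h2 : IsUnit (1 - (h / 2) • A)) (heig : (A, lam) ∈ eigenpairSubalgebra K S v) :
    (mprk32Jacobian h A, mprk32Jacobian h lam) ∈ eigenpairSubalgebra K S v := by
  have stage₂ := mul_mem heig (mprk32SecondStageJacobian_mem_eigenpairSubalgebra h1 heig)
  have stage₃ := mul_mem heig (mprk32ThirdStageJacobian_mem_eigenpairSubalgebra h1 h2 heig)
  exact mul_mem
    (ringInverse_mem_eigenpairSubalgebra h1 (one_sub_smul_mem_eigenpairSubalgebra heig h))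
    (add_mem
      (sub_mem (add_mem (one_mem _) (Subalgebra.smul_mem _ heig (h / 6)))
        (Subalgebra.smul_mem _ stage₂ (5 * h / 6)))
      (Subalgebra.smul_mem _ stage₃ (2 * h / 3)))

theorem mprk32_jacobian_eigenvector_general [NeZero (2 : K)] [NeZero (3 : K)]
    (h1 : IsUnit (1 - h • A)) (h2 : IsUnit (1 - (h / 2) • A)) (hv : v ≠ 0)
    (heig : A • v = lam • v) :
    1 - h * lam ≠ 0 ∧ 2 - h * lam ≠ 0 ∧
      mprk32Jacobian h A • v = mprk32StabilityFunction (h * lam) • v := by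
  have one_sub_ne_zero : 1 - h * lam ≠ 0 :=
    ne_zero_of_isUnit_of_smul_eq_smul h1 hv (one_sub_smul_mem_eigenpairSubalgebra heig h)
  have one_sub_half_ne_zero : 1 - h / 2 * lam ≠ 0 :=
    ne_zero_of_isUnit_of_smul_eq_smul h2 hv (one_sub_smul_mem_eigenpairSubalgebra heig (h / 2))
  have two_sub_ne_zero : 2 - h * lam ≠ 0 := by
    rw [show 2 - h * lam = 2 * (1 - h / 2 * lam) by field_simp]
    exact mul_ne_zero two_ne_zero one_sub_half_ne_zero
  refine ⟨one_sub_ne_zero, two_sub_ne_zero, ?_⟩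
  rw [← mprk32Jacobian_scalar one_sub_ne_zero two_sub_ne_zero]
  exact mprk32Jacobian_mem_eigenpairSubalgebra h1 h2 heig

end Eigenvector

theorem mprk32Jacobian_matrix {K n : Type*} [Field K] [Fintype n] [DecidableEq n] (h : K)
    (A : Matrix n n K) :
    mprk32Jacobian h A = (1 - h • A)⁻¹ *
      (1 + (h / 6) • A - (5 * h / 6) • (A * (1 - h • A)⁻¹) -
        (2 * h / 3) • (A * ((h / 2) • A - 1)⁻¹ *
          (1 + (h / 4) • A - (h / 4) • (A * (1 - h • A)⁻¹)))) := by
  have inverse_neg : (1 - (h / 2) • A)⁻¹ʳ = -((h / 2) • A - 1)⁻¹ʳ := by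
    rw [← ringInverse_neg, neg_sub]
  simp only [mprk32Jacobian, mprk32ThirdStageJacobian, mprk32SecondStageJacobian, inverse_neg,
    Matrix.nonsing_inv_eq_ringInverse, neg_mul, mul_neg, smul_neg, ← sub_eq_add_neg, mul_assoc]

/-- Let `A` be a complex `N×N` matrix and `h` a complex number such that
`I - hA` and `I - (h/2)A` are invertible, and let `M` be the Jacobian of the
MPRK(3,2) map at a steady state, namely
`M = (I - hA)⁻¹ ( I + (h/6)A - (5h/6) A (I - hA)⁻¹
      - (2h/3) A ((h/2)A - I)⁻¹ ( I + (h/4)A - (h/4) A (I - hA)⁻¹ ) )`.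
Then for every eigenvector `v` of `A` with eigenvalue `λ` one has
`1 - hλ ≠ 0`, `2 - hλ ≠ 0`, and `M v = R(hλ) v` where
`R(z) = (z^3 + 18z - 12)/(6(1-z)^2(z-2))`. -/
theorem mprk32_jacobian_eigenvector {N : ℕ} (A : Matrix (Fin N) (Fin N) ℂ)
    (h : ℂ)
    (h1 : IsUnit (1 - h • A)) (h2 : IsUnit (1 - (h / 2) • A))
    (M : Matrix (Fin N) (Fin N) ℂ)
    (hM : M = (1 - h • A)⁻¹ *
      (1 + (h / 6) • A - (5 * h / 6) • (A * (1 - h • A)⁻¹) -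
        (2 * h / 3) • (A * ((h / 2) • A - 1)⁻¹ *
          (1 + (h / 4) • A - (h / 4) • (A * (1 - h • A)⁻¹)))))
    (v : Fin N → ℂ) (lam : ℂ) (hv : v ≠ 0) (heig : A.mulVec v = lam • v) :
    1 - h * lam ≠ 0 ∧ 2 - h * lam ≠ 0 ∧
      M.mulVec v = (((h * lam) ^ 3 + 18 * (h * lam) - 12) /
        (6 * (1 - h * lam) ^ 2 * (h * lam - 2))) • v := by
  rw [hM, ← mprk32Jacobian_matrix]
  -- The scoped action of matrices on vectors unfolds to `Matrix.mulVec`.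
  open scoped Matrix.Module in
  exact mprk32_jacobian_eigenvector_general h1 h2 hv heig
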